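/- arXiv:0911.5086 — 2 statements merged into one kernel-verified Lean document; each statement's English description precedes it below -/
import Mathlib

section
/- Fix d ≥ 2 and m ≥ 2. There exists a constant c > 0, depending only on d and m, such that for any m parallel hyperplanes Π_1, …, Π_m in E^{d+1} and finite sets P_i ⊂ Π_i with each 𝒫_i = conv(P_i) a d-dimensional polytope with n_i vertices, the polytope 𝒫 = conv(P_1 ∪ … ∪ P_m) satisfies, for every 0 ≤ k ≤ ⌊d/2⌋: f_k(𝒫) ≤ c · ( Σ_{1 ≤ i ≠ j ≤ m} n_i · n_j^k + Σ_{i=1}^m n_i^{min(k+1, ⌊d/2⌋)} ). (Lemma 2.4.) -/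
open Set Pointwise RealInnerProductSpace

/-- The dimension of the affine hull of a set. -/
noncomputable def adim {N : ℕ} (F : Set (EuclideanSpace ℝ (Fin N))) : ℕ :=
  Module.finrank ℝ (vectorSpan ℝ F)

/-- The number of `k`-dimensional nonempty exposed faces of `C`. -/
noncomputable def fCount {N : ℕ} (C : Set (EuclideanSpace ℝ (Fin N))) (k : ℕ) : ℕ :=
  {F : Set (EuclideanSpace ℝ (Fin N)) |
    IsExposed ℝ C F ∧ F.Nonempty ∧ adim F = k}.ncard

/-!
A `k`-face `F` of the polytope is the intersection of the polytope with the affine span of `k + 1`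
vertices of the `P i`, so `F` is determined by these vertices; recording which `P i` each of them
belongs to gives a colour pattern, and there are at most `m ^ (k + 1)` patterns. If a pattern uses
at least two colours, choosing the vertices one by one gives at most `∏ r, n (c r) ≤ n i * n j ^ k`
faces, where `n j` is the largest factor and `i ≠ j`. If the pattern is constant with value `i`,
then `F ∩ conv (P i)` is a `k`-face of `conv (P i)` with the same affine span as `F`, so at most as
many faces arise as the `d`-polytope `conv (P i)` has proper faces, which is `O(n i ^ (d / 2))` by
the asymptotic upper bound theorem; when `k + 1 ≤ d / 2`, the count of `(k + 1)`-tuples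
`n i ^ (k + 1)` is used instead.

The asymptotic upper bound theorem is proved on the polar polyhedron `{a | ∀ i, a (p i) ≤ 1}`, whose
sets of tight constraints correspond to the faces. Moving the right-hand sides by `t • e`, with `e`
generic and `t > 0` small, makes the polyhedron simple, and each original tight set is still spanned
by a subset of the tight set of some new vertex. The vertices of a simple polyhedron are counted
following Seidel: fix a generic vector `u` and expand it in the basis of tight normals at a vertex.
The normals with negative coefficient determine the vertex, because it maximises
`a ↦ a u` among the feasible `a` at which they are tight; replacing `u` by `-u`, so do those with
positive coefficient, and one of the two sets has at most `d / 2` elements.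
-/

/-! ### Generic linear constraints -/

lemma card_finset_card_le (ι : Type*) [Fintype ι] (h : ℕ) :
    Nat.card {R : Finset ι // R.card ≤ h} ≤ (Fintype.card ι + 1) ^ h := by
  classical
  rw [Nat.card_eq_fintype_card, Fintype.card_subtype]
  calc ({R : Finset ι | R.card ≤ h} : Finset (Finset ι)).card
      ≤ ((Finset.range (h + 1)).biUnion fun j => Finset.powersetCard j Finset.univ).card :=
        Finset.card_le_card fun R hR => by simpa [Nat.lt_succ_iff] using hR
    _ ≤ ∑ j ∈ Finset.range (h + 1), (Fintype.card ι).choose j := by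
        simpa using Finset.card_biUnion_le (s := Finset.range (h + 1))
          (t := fun j => Finset.powersetCard j (Finset.univ : Finset ι))
    _ ≤ ∑ j ∈ Finset.range (h + 1), Fintype.card ι ^ j * 1 ^ (h - j) * h.choose j := by
        refine Finset.sum_le_sum fun j hj => ?_
        rw [one_pow, mul_one]
        exact (Nat.choose_le_pow _ _).trans
          (Nat.le_mul_of_pos_right _ (Nat.choose_pos (Finset.mem_range_succ_iff.1 hj)))
    _ = (Fintype.card ι + 1) ^ h := (add_pow _ _ _).symm

section Arrangement

variable {𝕜 W ι : Type*} [Field 𝕜] [AddCommGroup W] [Module 𝕜 W]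
  {p : ι → W} {b : ι → 𝕜} {a a₁ a₂ : Module.Dual 𝕜 W} {c : ι →₀ 𝕜}

/-- The index set of the constraints `a (p i) ≤ b i` that hold with equality at the functional
`a`. -/
def tightSet (p : ι → W) (b : ι → 𝕜) (a : Module.Dual 𝕜 W) : Set ι :=
  {i | a (p i) = b i}

/-- The hyperplanes `a (p i) = b i` of the dual space form a simple arrangement: those through a
common point have linearly independent normals. -/
def IsSimpleArrangement (p : ι → W) (b : ι → 𝕜) : Prop :=
  ∀ a : Module.Dual 𝕜 W, LinearIndepOn 𝕜 p (tightSet p b a)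

lemma tightSet_subset_tightSet {S : Set ι} (h₁ : S ⊆ tightSet p b a₁) (h₂ : S ⊆ tightSet p b a₂)
    (hspan : p '' tightSet p b a₁ ⊆ Submodule.span 𝕜 (p '' S)) :
    tightSet p b a₁ ⊆ tightSet p b a₂ := by
  have hagree : EqOn a₁ a₂ (Submodule.span 𝕜 (p '' S)) :=
    LinearMap.eqOn_span <| forall_mem_image.2 fun i hi => (h₁ hi).trans (h₂ hi).symm
  exact fun i hi => (hagree (hspan (mem_image_of_mem p hi))).symm.trans hi

lemma eq_of_tightSet_subset (hspan : Submodule.span 𝕜 (p '' tightSet p b a₁) = ⊤)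
    (h : tightSet p b a₁ ⊆ tightSet p b a₂) : a₁ = a₂ :=
  LinearMap.ext_on hspan <| forall_mem_image.2 fun _ hi => hi.trans (h hi).symm

lemma apply_linearCombination_sub_apply (h₁ : (c.support : Set ι) ⊆ tightSet p b a₁) :
    a₁ (Finsupp.linearCombination 𝕜 p c) - a₂ (Finsupp.linearCombination 𝕜 p c) =
      c.sum fun i r => r * (b i - a₂ (p i)) := by
  simp only [Finsupp.linearCombination_apply, Finsupp.sum, map_sum, map_smul, smul_eq_mul,
    ← Finset.sum_sub_distrib, mul_sub]
  exact Finset.sum_congr rfl fun i hi => by rw [show a₁ (p i) = b i from h₁ hi]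

lemma exists_forall_mem_span_image_imp_eq_top [Infinite 𝕜] [Finite ι] (p : ι → W) :
    ∃ u : W, ∀ S : Set ι, u ∈ Submodule.span 𝕜 (p '' S) → Submodule.span 𝕜 (p '' S) = ⊤ := by
  obtain ⟨u, hu⟩ := Submodule.exists_forall_notMem_of_forall_ne_top
    (fun S : {S : Set ι // Submodule.span 𝕜 (p '' S) ≠ ⊤} => Submodule.span 𝕜 (p '' S))
    fun S => S.2
  exact ⟨u, fun S hS => by_contra fun hne => hu ⟨S, hne⟩ hS⟩

lemma exists_support_eq_and_linearCombination_eq {T : Set ι} (hT : LinearIndepOn 𝕜 p T)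
    (hspan : Submodule.span 𝕜 (p '' T) = ⊤) {u : W}
    (hu : ∀ S : Set ι, u ∈ Submodule.span 𝕜 (p '' S) → Submodule.span 𝕜 (p '' S) = ⊤) :
    ∃ c : ι →₀ 𝕜, (c.support : Set ι) = T ∧ Finsupp.linearCombination 𝕜 p c = u := by
  obtain ⟨c, hcT, hcu⟩ := (Finsupp.mem_span_image_iff_linearCombination 𝕜).1
    (hspan ▸ Submodule.mem_top : u ∈ Submodule.span 𝕜 (p '' T))
  have htop : Submodule.span 𝕜 (p '' c.support) = ⊤ :=
    hu _ ((Finsupp.mem_span_image_iff_linearCombination 𝕜).2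
      ⟨c, (Finsupp.mem_supported 𝕜 c).2 subset_rfl, hcu⟩)
  refine ⟨c, hcT.antisymm fun i hi => by_contra fun hic => ?_, hcu⟩
  have hsub : (c.support : Set ι) ⊆ T \ {i} := subset_sdiff_singleton hcT hic
  exact hT.notMem_span hi <|
    Submodule.span_mono (image_mono hsub) (htop ▸ Submodule.mem_top)

/-- A linear relation `l` among normals of hyperplanes through a common point forces
`∑ l i * b i + t * ∑ l i * e i = 0`, so if `∑ l i * e i ≠ 0` it excludes a single value of `t`. -/
lemma exists_finite_not_isSimpleArrangement [Infinite 𝕜] [Finite ι] (p : ι → W) (b : ι → 𝕜) :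
    ∃ e : ι → 𝕜, {t : 𝕜 | ¬ IsSimpleArrangement p (b + t • e)}.Finite := by
  have hdep : ∀ S : {S : Set ι // ¬ LinearIndepOn 𝕜 p S}, ∃ l ∈ Finsupp.supported 𝕜 𝕜 S.1,
      Finsupp.linearCombination 𝕜 p l = 0 ∧ l ≠ 0 := fun S => linearDepOn_iff.1 S.2
  choose l hlS hlp hl0 using hdep
  obtain ⟨f, hf⟩ := Module.exists_dual_forall_apply_ne_zero (K := 𝕜) l hl0
  refine ⟨fun i => f (Finsupp.single i 1), (finite_range fun S =>
    -(Finsupp.linearCombination 𝕜 b (l S) / f (l S))).subset ?_⟩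
  intro t ht
  obtain ⟨a, ha⟩ := not_forall.1 ht
  refine ⟨⟨_, ha⟩, ?_⟩
  set S : {S : Set ι // ¬ LinearIndepOn 𝕜 p S} := ⟨_, ha⟩
  have hfl : f (l S) = (l S).sum fun i r => r * f (Finsupp.single i 1) := by
    conv_lhs => rw [← Finsupp.sum_single (l S), map_finsuppSum]
    refine Finsupp.sum_congr fun i _ => ?_
    rw [← smul_eq_mul, ← map_smul, Finsupp.smul_single_one]
  have hrel : Finsupp.linearCombination 𝕜 b (l S) + t * f (l S) = 0 := by
    calc Finsupp.linearCombination 𝕜 b (l S) + t * f (l S)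
        = (l S).sum fun i r => r * a (p i) := by
          rw [hfl, Finsupp.linearCombination_apply, Finsupp.mul_sum, ← Finsupp.sum_add]
          refine Finsupp.sum_congr fun i hi => ?_
          have : a (p i) = b i + t * f (Finsupp.single i 1) := hlS S hi
          rw [this, smul_eq_mul]
          ring
      _ = a (Finsupp.linearCombination 𝕜 p (l S)) := by
          simp [Finsupp.linearCombination_apply, Finsupp.sum]
      _ = 0 := by rw [hlp, map_zero]
  rw [neg_eq_iff_eq_neg, div_eq_iff (hf S)]
  linear_combination hrel

end Arrangement

/-! ### Vertices of simple polyhedra -/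

section Polyhedron

variable {𝕜 W ι : Type*} [Field 𝕜] [LinearOrder 𝕜] [AddCommGroup W] [Module 𝕜 W]
  {p : ι → W} {b : ι → 𝕜} {a a₁ a₂ : Module.Dual 𝕜 W} {c c₁ c₂ : ι →₀ 𝕜}

/-- The polyhedron in the dual space cut out by the constraints `a (p i) ≤ b i`; for `b = 1` it is
the polar of the points `p i`. -/
def dualPolyhedron (p : ι → W) (b : ι → 𝕜) : Set (Module.Dual 𝕜 W) :=
  {a | ∀ i, a (p i) ≤ b i}

/-- The vertices of `dualPolyhedron p b`, encoded as the feasible functionals at which the normals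
of the tight constraints span the whole space. -/
def vertices (p : ι → W) (b : ι → 𝕜) : Set (Module.Dual 𝕜 W) :=
  {a ∈ dualPolyhedron p b | Submodule.span 𝕜 (p '' tightSet p b a) = ⊤}

/-- The indices of the negative coefficients of a formal linear combination. -/
def negSupport (c : ι →₀ 𝕜) : Finset ι :=
  {i ∈ c.support | c i < 0}

lemma ncard_tightSet_of_mem_vertices (hb : IsSimpleArrangement p b) (ha : a ∈ vertices p b) :
    (tightSet p b a).ncard = Module.finrank 𝕜 W := by
  rw [← finrank_top, ← ha.2, image_eq_range,
    Module.finrank_eq_nat_card_basis (Module.Basis.span (hb a)), Nat.card_coe_set_eq]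

lemma finite_vertices [Finite ι] : (vertices p b).Finite :=
  Finite.of_injOn (mapsTo_univ (tightSet p b) _)
    (fun _ h₁ _ _ heq => eq_of_tightSet_subset h₁.2 heq.subset) (toFinite _)

variable [IsStrictOrderedRing 𝕜]

lemma exists_tightSet_ssubset [Finite ι] (ha : a ∈ dualPolyhedron p b) {i : ι}
    (hi : p i ∉ Submodule.span 𝕜 (p '' tightSet p b a)) :
    ∃ a' ∈ dualPolyhedron p b, tightSet p b a ⊂ tightSet p b a' := by
  obtain ⟨w, hw, hker⟩ : ∃ w : Module.Dual 𝕜 W,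
      0 < w (p i) ∧ ∀ j ∈ tightSet p b a, w (p j) = 0 := by
    obtain ⟨v, hv, hker⟩ := Submodule.exists_le_ker_of_notMem hi
    refine ⟨v (p i) • v, mul_self_pos.2 hv, fun j hj => ?_⟩
    have hvj : v (p j) = 0 := hker (Submodule.subset_span (mem_image_of_mem p hj))
    rw [LinearMap.smul_apply, hvj, smul_zero]
  obtain ⟨j, hj : 0 < w (p j), hmin⟩ := exists_min_image {j | 0 < w (p j)}
    (fun j => (b j - a (p j)) / w (p j)) (toFinite _) ⟨i, hw⟩
  set r := (b j - a (p j)) / w (p j)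
  have hr : 0 ≤ r := div_nonneg (sub_nonneg.2 (ha j)) hj.le
  have htight : a (p j) + r * w (p j) = b j := by rw [div_mul_cancel₀ _ hj.ne']; ring
  refine ⟨a + r • w, fun l => ?_, fun l hl => ?_, fun hsub => ?_⟩
  · change a (p l) + r * w (p l) ≤ b l
    obtain hl | hl := le_or_gt (w (p l)) 0
    · linarith [ha l, mul_nonpos_of_nonneg_of_nonpos hr hl]
    · linarith [(le_div_iff₀ hl).1 (hmin l hl)]
  · change a (p l) + r * w (p l) = b l
    rw [hker l hl, mul_zero, add_zero, hl]
  · exact hj.ne' (hker j (hsub htight))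

lemma exists_tightSet_spanning [Finite ι] (ha : a ∈ dualPolyhedron p b) :
    ∃ a' ∈ dualPolyhedron p b, tightSet p b a ⊆ tightSet p b a' ∧
      ∀ i, p i ∈ Submodule.span 𝕜 (p '' tightSet p b a') := by
  obtain ⟨_, hle, ⟨a', ha', rfl⟩, hmax⟩ :=
    (toFinite (tightSet p b '' dualPolyhedron p b)).exists_le_maximal (mem_image_of_mem _ ha)
  refine ⟨a', ha', hle, fun i => by_contra fun hi => ?_⟩
  obtain ⟨a'', ha'', hlt⟩ := exists_tightSet_ssubset ha' hi
  exact hlt.2 (hmax (mem_image_of_mem _ ha'') hlt.1)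

lemma mul_slack_nonneg (h₂ : a₂ ∈ dualPolyhedron p b)
    (hneg : (negSupport c : Set ι) ⊆ tightSet p b a₂) {i : ι} (hi : i ∈ c.support) :
    0 ≤ c i * (b i - a₂ (p i)) := by
  obtain hci | hci := lt_or_ge (c i) 0
  · have htight : a₂ (p i) = b i := hneg (Finset.mem_filter.2 ⟨hi, hci⟩)
    rw [htight, sub_self, mul_zero]
  · exact mul_nonneg hci (sub_nonneg.2 (h₂ i))

lemma apply_linearCombination_le (h₁ : (c.support : Set ι) ⊆ tightSet p b a₁)
    (h₂ : a₂ ∈ dualPolyhedron p b) (hneg : (negSupport c : Set ι) ⊆ tightSet p b a₂) :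
    a₂ (Finsupp.linearCombination 𝕜 p c) ≤ a₁ (Finsupp.linearCombination 𝕜 p c) := by
  rw [← sub_nonneg, apply_linearCombination_sub_apply h₁]
  exact Finset.sum_nonneg fun i hi => mul_slack_nonneg h₂ hneg hi

lemma support_subset_tightSet_of_apply_eq (h₁ : (c.support : Set ι) ⊆ tightSet p b a₁)
    (h₂ : a₂ ∈ dualPolyhedron p b) (hneg : (negSupport c : Set ι) ⊆ tightSet p b a₂)
    (heq : a₁ (Finsupp.linearCombination 𝕜 p c) = a₂ (Finsupp.linearCombination 𝕜 p c)) :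
    (c.support : Set ι) ⊆ tightSet p b a₂ := by
  intro i hi
  rw [← sub_eq_zero, apply_linearCombination_sub_apply h₁, Finsupp.sum,
    Finset.sum_eq_zero_iff_of_nonneg fun i hi => mul_slack_nonneg h₂ hneg hi] at heq
  have hslack : b i - a₂ (p i) = 0 :=
    (mul_eq_zero.1 (heq i hi)).resolve_left (Finsupp.mem_support_iff.1 hi)
  exact (sub_eq_zero.1 hslack).symm

lemma eq_of_negSupport_eq (h₁ : a₁ ∈ vertices p b) (h₂ : a₂ ∈ vertices p b)
    (hc₁ : (c₁.support : Set ι) = tightSet p b a₁) (hc₂ : (c₂.support : Set ι) = tightSet p b a₂)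
    (hlc : Finsupp.linearCombination 𝕜 p c₁ = Finsupp.linearCombination 𝕜 p c₂)
    (hneg : negSupport c₁ = negSupport c₂) : a₁ = a₂ := by
  have hneg₁ : (negSupport c₁ : Set ι) ⊆ tightSet p b a₂ :=
    hneg ▸ hc₂ ▸ Finset.coe_subset.2 (Finset.filter_subset _ _)
  have hneg₂ : (negSupport c₂ : Set ι) ⊆ tightSet p b a₁ :=
    hneg ▸ hc₁ ▸ Finset.coe_subset.2 (Finset.filter_subset _ _)
  have hle₁ := apply_linearCombination_le hc₁.subset h₂.1 hneg₁
  have hle₂ := apply_linearCombination_le hc₂.subset h₁.1 hneg₂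
  exact eq_of_tightSet_subset h₁.2 <| hc₁ ▸
    support_subset_tightSet_of_apply_eq hc₁.subset h₂.1 hneg₁ (hle₁.antisymm' (hlc ▸ hle₂))

lemma card_negSupport_add_card_negSupport_neg (c : ι →₀ 𝕜) :
    (negSupport c).card + (negSupport (-c)).card = c.support.card := by
  have hneg : negSupport (-c) = {i ∈ c.support | ¬ c i < 0} := by
    ext i
    simp only [negSupport, Finsupp.support_neg, Finset.mem_filter, Finsupp.neg_apply, neg_lt_zero,
      not_lt, Finsupp.mem_support_iff]
    exact and_congr_right fun hi => ⟨le_of_lt, fun h => h.lt_of_ne' hi⟩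
  rw [hneg, negSupport, Finset.card_filter_add_card_filter_not]

lemma ncard_setOf_card_negSupport_le [Fintype ι] {c : Module.Dual 𝕜 W → ι →₀ 𝕜} {u : W}
    (hc : ∀ a ∈ vertices p b, ((c a).support : Set ι) = tightSet p b a)
    (hu : ∀ a ∈ vertices p b, Finsupp.linearCombination 𝕜 p (c a) = u) (h : ℕ) :
    {a ∈ vertices p b | (negSupport (c a)).card ≤ h}.ncard ≤ (Fintype.card ι + 1) ^ h := by
  refine le_trans ?_ (card_finset_card_le ι h)
  exact ncard_le_ncard_of_injOn (t := {R : Finset ι | R.card ≤ h}) (fun a => negSupport (c a))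
    (fun a ha => ha.2) (fun a₁ h₁ a₂ h₂ hneg => eq_of_negSupport_eq h₁.1 h₂.1 (hc _ h₁.1)
      (hc _ h₂.1) ((hu _ h₁.1).trans (hu _ h₂.1).symm) hneg)

lemma ncard_vertices_le [Fintype ι] (hb : IsSimpleArrangement p b) :
    (vertices p b).ncard ≤ 2 * (Fintype.card ι + 1) ^ (Module.finrank 𝕜 W / 2) := by
  obtain ⟨u, hu⟩ := exists_forall_mem_span_image_imp_eq_top (𝕜 := 𝕜) p
  have hcert : ∀ a : Module.Dual 𝕜 W, ∃ c : ι →₀ 𝕜, a ∈ vertices p b →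
      (c.support : Set ι) = tightSet p b a ∧ Finsupp.linearCombination 𝕜 p c = u := by
    intro a
    by_cases ha : a ∈ vertices p b
    · obtain ⟨c, hc⟩ := exists_support_eq_and_linearCombination_eq (hb a) ha.2 hu
      exact ⟨c, fun _ => hc⟩
    · exact ⟨0, fun h => absurd h ha⟩
  choose c hc using hcert
  set h := Module.finrank 𝕜 W / 2
  have hcover : vertices p b ⊆ {a ∈ vertices p b | (negSupport (c a)).card ≤ h} ∪
      {a ∈ vertices p b | (negSupport (-c a)).card ≤ h} := by
    intro a ha
    have hsum : (negSupport (c a)).card + (negSupport (-c a)).card = Module.finrank 𝕜 W := by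
      rw [card_negSupport_add_card_negSupport_neg, ← ncard_tightSet_of_mem_vertices hb ha,
        ← (hc a ha).1, ncard_coe_finset]
    obtain hle | hle : (negSupport (c a)).card ≤ h ∨ (negSupport (-c a)).card ≤ h := by omega
    exacts [Or.inl ⟨ha, hle⟩, Or.inr ⟨ha, hle⟩]
  calc (vertices p b).ncard
      ≤ {a ∈ vertices p b | (negSupport (c a)).card ≤ h}.ncard +
          {a ∈ vertices p b | (negSupport (-c a)).card ≤ h}.ncard :=
        (ncard_le_ncard hcover ((finite_vertices.sep _).union (finite_vertices.sep _))).trans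
          (ncard_union_le _ _)
    _ ≤ (Fintype.card ι + 1) ^ h + (Fintype.card ι + 1) ^ h :=
        add_le_add
          (ncard_setOf_card_negSupport_le (fun a ha => (hc a ha).1) (fun a ha => (hc a ha).2) h)
          (ncard_setOf_card_negSupport_le (u := -u)
            (fun a ha => (congrArg _ (Finsupp.support_neg (c a))).trans (hc a ha).1)
            (fun a ha => by rw [map_neg, (hc a ha).2]) h)
    _ = 2 * (Fintype.card ι + 1) ^ h := (two_mul _).symm

end Polyhedron

/-! ### The asymptotic upper bound theorem in dual form -/

section Perturbation

variable {𝕜 W ι : Type*} [Field 𝕜] [LinearOrder 𝕜] [IsStrictOrderedRing 𝕜] [AddCommGroup W]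
  [Module 𝕜 W] {p : ι → W} {b e : ι → 𝕜} {a₀ α : Module.Dual 𝕜 W}

lemma exists_le_and_image_tightSet_subset_span [Finite ι] (p : ι → W) (e : ι → 𝕜)
    (a₀ : Module.Dual 𝕜 W) :
    ∃ α : Module.Dual 𝕜 W, (∀ i ∈ tightSet p 1 a₀, α (p i) ≤ e i) ∧
      p '' tightSet p 1 a₀ ⊆ Submodule.span 𝕜 (p '' (tightSet p 1 a₀ ∩ tightSet p e α)) := by
  set F := tightSet p 1 a₀
  obtain ⟨M, hM⟩ := (finite_range e).bddBelow
  have hfeas : M • a₀ ∈ dualPolyhedron (fun i : F => p i) (fun i => e i) := fun i => by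
    change M * a₀ (p i) ≤ e i
    rw [show a₀ (p i) = 1 from i.2, mul_one]
    exact hM (mem_range_self _)
  obtain ⟨α, hα, -, hspan⟩ := exists_tightSet_spanning hfeas
  refine ⟨α, fun i hi => hα ⟨i, hi⟩, image_subset_iff.2 fun i hi => ?_⟩
  refine Submodule.span_mono ?_ (hspan ⟨i, hi⟩)
  exact image_subset_iff.2 fun j hj => mem_image_of_mem p ⟨j.2, hj⟩

variable [TopologicalSpace 𝕜] [OrderTopology 𝕜]

lemma eventually_add_smul_mem_dualPolyhedron [Finite ι] (ha₀ : a₀ ∈ dualPolyhedron p b)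
    (hα : ∀ i ∈ tightSet p b a₀, α (p i) ≤ e i) :
    ∀ᶠ t : 𝕜 in nhdsWithin 0 (Ioi 0), a₀ + t • α ∈ dualPolyhedron p (b + t • e) := by
  refine Filter.eventually_all.2 fun i => ?_
  change ∀ᶠ t in nhdsWithin 0 (Ioi 0), a₀ (p i) + t * α (p i) ≤ b i + t * e i
  obtain hlt | heq := (ha₀ i).lt_or_eq
  · have hev : ∀ᶠ t in nhds (0 : 𝕜), a₀ (p i) + t * α (p i) < b i + t * e i :=
      ContinuousAt.eventually_lt (by fun_prop) (by fun_prop) (by simpa using hlt)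
    exact Filter.Eventually.mono (nhdsWithin_le_nhds hev) fun t => le_of_lt
  · filter_upwards [self_mem_nhdsWithin] with t (ht : 0 < t)
    rw [heq]
    gcongr
    exact hα i heq

lemma eventually_exists_mem_vertices [Finite ι] (hp : Submodule.span 𝕜 (range p) = ⊤) (e : ι → 𝕜)
    (ha₀ : a₀ ∈ dualPolyhedron p 1) :
    ∀ᶠ t : 𝕜 in nhdsWithin 0 (Ioi 0), ∃ a ∈ vertices p (1 + t • e),
      ∃ S ⊆ tightSet p 1 a₀ ∩ tightSet p (1 + t • e) a,
        p '' tightSet p 1 a₀ ⊆ Submodule.span 𝕜 (p '' S) := by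
  obtain ⟨α, hα, hspan⟩ := exists_le_and_image_tightSet_subset_span p e a₀
  filter_upwards [eventually_add_smul_mem_dualPolyhedron ha₀ hα] with t ht
  obtain ⟨a, ha, hsub, hmem⟩ := exists_tightSet_spanning ht
  have htop : Submodule.span 𝕜 (p '' tightSet p (1 + t • e) a) = ⊤ :=
    top_unique <| hp ▸ Submodule.span_le.2 (range_subset_iff.2 hmem)
  refine ⟨a, ⟨ha, htop⟩, _, subset_inter inter_subset_left fun i hi => hsub ?_, hspan⟩
  change a₀ (p i) + t * α (p i) = 1 + t * e i
  rw [show a₀ (p i) = 1 from hi.1, show α (p i) = e i from hi.2]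

end Perturbation

section UpperBound

variable {𝕜 W ι : Type*} [Field 𝕜] [LinearOrder 𝕜] [IsStrictOrderedRing 𝕜] [AddCommGroup W]
  [Module 𝕜 W] [Fintype ι] {p : ι → W} {b₀ b : ι → 𝕜}

lemma ncard_le_of_forall_exists_mem_vertices (hb : IsSimpleArrangement p b) {𝓕 : Set (Set ι)}
    (h𝓕 : 𝓕 ⊆ range (tightSet p b₀))
    (hvert : ∀ F ∈ 𝓕, ∃ a ∈ vertices p b, ∃ S ⊆ F ∩ tightSet p b a,
      p '' F ⊆ Submodule.span 𝕜 (p '' S)) :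
    𝓕.ncard ≤
      2 * (Fintype.card ι + 1) ^ (Module.finrank 𝕜 W / 2) * 2 ^ Module.finrank 𝕜 W := by
  have := (finite_vertices (p := p) (b := b)).fintype
  choose! a ha S hS hspan using hvert
  have hle : ∀ F₁ ∈ 𝓕, ∀ F₂ ∈ 𝓕, S F₁ = S F₂ → F₁ ⊆ F₂ := by
    intro F₁ h₁ F₂ h₂ heq
    obtain ⟨a₁, rfl⟩ := h𝓕 h₁
    obtain ⟨a₂, rfl⟩ := h𝓕 h₂
    exact tightSet_subset_tightSet ((hS _ h₁).trans inter_subset_left)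
      (heq ▸ (hS _ h₂).trans inter_subset_left) (hspan _ h₁)
  calc 𝓕.ncard
      ≤ (⋃ v : vertices p b, 𝒫 (tightSet p b v)).ncard :=
        ncard_le_ncard_of_injOn S
          (fun F hF => mem_iUnion.2 ⟨⟨a F, ha F hF⟩, (hS F hF).trans inter_subset_right⟩)
          (fun F₁ h₁ F₂ h₂ heq => (hle F₁ h₁ F₂ h₂ heq).antisymm (hle F₂ h₂ F₁ h₁ heq.symm))
    _ ≤ ∑ v : vertices p b, (𝒫 (tightSet p b v)).ncard := ncard_iUnion_le_of_fintype _
    _ = (vertices p b).ncard * 2 ^ Module.finrank 𝕜 W := by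
        rw [Finset.sum_congr rfl fun v _ => (ncard_powerset _).trans
            (congrArg (2 ^ ·) (ncard_tightSet_of_mem_vertices hb v.2)), Finset.sum_const,
          Finset.card_univ, smul_eq_mul, ← Nat.card_eq_fintype_card, Nat.card_coe_set_eq]
    _ ≤ _ := Nat.mul_le_mul_right _ (ncard_vertices_le hb)

lemma ncard_image_tightSet_le_of_span_eq_top (hp : Submodule.span 𝕜 (range p) = ⊤) :
    (tightSet p (1 : ι → 𝕜) '' dualPolyhedron p 1).ncard ≤
      2 * (Fintype.card ι + 1) ^ (Module.finrank 𝕜 W / 2) * 2 ^ Module.finrank 𝕜 W := by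
  let _ : TopologicalSpace 𝕜 := Preorder.topology 𝕜
  have : OrderTopology 𝕜 := ⟨rfl⟩
  obtain ⟨e, he⟩ := exists_finite_not_isSimpleArrangement p (1 : ι → 𝕜)
  have hsimple : ∀ᶠ t : 𝕜 in nhdsWithin 0 (Ioi 0), IsSimpleArrangement p (1 + t • e) :=
    (he.eventually_cofinite_notMem.filter_mono
      ((nhdsGT_le_nhdsNE 0).trans (nhdsNE_le_cofinite 0))).mono fun _ => not_not.1
  have hvert : ∀ᶠ t : 𝕜 in nhdsWithin 0 (Ioi 0), ∀ F ∈ tightSet p 1 '' dualPolyhedron p 1,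
      ∃ a ∈ vertices p (1 + t • e), ∃ S ⊆ F ∩ tightSet p (1 + t • e) a,
        p '' F ⊆ Submodule.span 𝕜 (p '' S) :=
    (Filter.eventually_all_finite (toFinite _)).2 <| forall_mem_image.2 fun a₀ ha₀ =>
      eventually_exists_mem_vertices hp e ha₀
  obtain ⟨t, ht, htvert⟩ := (hsimple.and hvert).exists
  exact ncard_le_of_forall_exists_mem_vertices ht (image_subset_range _ _) htvert

lemma ncard_image_tightSet_le (p : ι → W) :
    (tightSet p (1 : ι → 𝕜) '' dualPolyhedron p 1).ncard ≤
      2 * (Fintype.card ι + 1) ^ ((range p).finrank 𝕜 / 2) * 2 ^ (range p).finrank 𝕜 := by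
  let q : ι → Submodule.span 𝕜 (range p) := fun i => ⟨p i, Submodule.subset_span ⟨i, rfl⟩⟩
  have hq : Submodule.span 𝕜 (range q) = ⊤ := Submodule.span_range_subtype_eq_top_iff _ _ |>.2 rfl
  have hsub : tightSet p (1 : ι → 𝕜) '' dualPolyhedron p 1 ⊆ tightSet q 1 '' dualPolyhedron q 1 :=
    image_subset_iff.2 fun a ha => ⟨a.domRestrict _, ha, rfl⟩
  exact (ncard_le_ncard hsub (toFinite _)).trans (ncard_image_tightSet_le_of_span_eq_top hq)

end UpperBound

/-! ### Faces of polytopes -/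

section Faces

variable {E : Type*} [AddCommGroup E] [Module ℝ E]

lemma vectorSpan_convexHull (A : Set E) : vectorSpan ℝ (convexHull ℝ A) = vectorSpan ℝ A := by
  rw [← direction_affineSpan, affineSpan_convexHull, direction_affineSpan]

lemma span_range_sub_eq_vectorSpan {V : Set E} {o : E} (ho : o ∈ affineSpan ℝ V) :
    Submodule.span ℝ (range fun v : V => (v : E) - o) = vectorSpan ℝ V := by
  rw [← vectorSpan_insert_eq_vectorSpan ho,
    vectorSpan_eq_span_vsub_set_right ℝ (mem_insert o V), image_insert_eq, vsub_self,
    Submodule.span_insert_zero, image_eq_range]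
  rfl

lemma exists_mem_affineSpan_forall_apply_lt {V : Set E} (hV : V.Finite) (hne : V.Nonempty) :
    ∃ o ∈ affineSpan ℝ V, ∀ (l : Module.Dual ℝ E) (s : ℝ),
      (∀ v ∈ V, l v ≤ s) → (∃ v ∈ V, l v < s) → l o < s := by
  lift V to Finset E using hV
  have hcard : (0 : ℝ) < ∑ _v ∈ V, 1 := by simpa using Finset.coe_nonempty.1 hne
  refine ⟨V.centerMass (fun _ => 1) id, convexHull_subset_affineSpan _
    (V.centerMass_id_mem_convexHull (fun _ _ => zero_le_one) hcard), fun l s hle hlt => ?_⟩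
  have hsum : ∑ v ∈ V, l v < ∑ _v ∈ V, s := Finset.sum_lt_sum hle hlt
  rw [Finset.centerMass, map_smul, map_sum, smul_eq_mul, inv_mul_lt_iff₀ hcard]
  simpa using hsum

lemma exists_affineSpan_range_eq {B : Set E} {k : ℕ} (hB : B.Finite) (hne : B.Nonempty)
    (hk : Module.finrank ℝ (vectorSpan ℝ B) = k) :
    ∃ s : Fin (k + 1) → E, (∀ j, s j ∈ B) ∧ affineSpan ℝ (range s) = affineSpan ℝ B := by
  obtain ⟨t, htB, hspan, hind⟩ := exists_affineIndependent ℝ E B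
  have := (hB.subset htB).fintype
  have : Nonempty t := nonempty_coe_sort.2 <| (affineSpan_nonempty ℝ).1 <|
    hspan ▸ (affineSpan_nonempty ℝ).2 hne
  have hcard : Fintype.card t = k + 1 := by
    rw [← hind.finrank_vectorSpan_add_one, Subtype.range_coe, ← direction_affineSpan, hspan,
      direction_affineSpan, hk]
  let f := Fintype.equivFinOfCardEq hcard
  refine ⟨fun j => f.symm j, fun j => htB (f.symm j).2, ?_⟩
  rw [← hspan]
  exact congrArg _ ((f.symm.surjective.range_comp _).trans Subtype.range_coe)

variable [TopologicalSpace E] {A C D F F₁ F₂ : Set E} {k : ℕ}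

/-- The nonempty exposed faces of `C` whose affine span has dimension `k`. -/
def kFaces (C : Set E) (k : ℕ) : Set (Set E) :=
  {F | IsExposed ℝ C F ∧ F.Nonempty ∧ Module.finrank ℝ (vectorSpan ℝ F) = k}

lemma inter_affineSpan_of_isExposed (hF : IsExposed ℝ C F) : C ∩ affineSpan ℝ F = F := by
  refine Subset.antisymm (fun x hx => ?_) (subset_inter hF.subset (subset_affineSpan ℝ F))
  obtain ⟨x₀, hx₀⟩ : F.Nonempty := (affineSpan_nonempty ℝ).1 ⟨x, hx.2⟩
  obtain ⟨l, rfl⟩ := hF ⟨x₀, hx₀⟩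
  have hconst : EqOn l.toLinearMap.toAffineMap (AffineMap.const ℝ E (l x₀)) (l.toExposed C) :=
    fun y hy => (hx₀.2 y hy.1).antisymm (hy.2 x₀ hx₀.1)
  have hlx : l x = l x₀ := AffineMap.eqOn_affineSpan hconst hx.2
  exact ⟨hx.1, fun y hy => hlx ▸ hx₀.2 y hy⟩

lemma eq_of_affineSpan_eq (h₁ : IsExposed ℝ C F₁) (h₂ : IsExposed ℝ C F₂)
    (h : affineSpan ℝ F₁ = affineSpan ℝ F₂) : F₁ = F₂ := by
  rw [← inter_affineSpan_of_isExposed h₁, h, inter_affineSpan_of_isExposed h₂]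

lemma isExposed_inter_of_subset (hF : IsExposed ℝ C F) (hD : D ⊆ C) : IsExposed ℝ D (F ∩ D) := by
  rintro ⟨x, hxF, hxD⟩
  obtain ⟨l, rfl⟩ := hF ⟨x, hxF⟩
  refine ⟨l, Subset.antisymm (fun y hy => ⟨hy.2, fun z hz => hy.1.2 z (hD hz)⟩) fun y hy => ?_⟩
  exact ⟨⟨hD hy.1, fun z hz => (hxF.2 z hz).trans (hy.2 x hxD)⟩, hy.1⟩

lemma inter_mem_kFaces (hF : F ∈ kFaces C k) (hD : D ⊆ C)
    (hspan : affineSpan ℝ (F ∩ D) = affineSpan ℝ F) : F ∩ D ∈ kFaces D k := by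
  refine ⟨isExposed_inter_of_subset hF.1 hD, ?_, ?_⟩
  · rw [← affineSpan_nonempty ℝ, hspan, affineSpan_nonempty]
    exact hF.2.1
  · rw [← direction_affineSpan, hspan, direction_affineSpan]
    exact hF.2.2

lemma preimage_mem_image_tightSet {o : E} (ho : ∀ (l : Module.Dual ℝ E) (s : ℝ),
      (∀ v ∈ A, l v ≤ s) → (∃ v ∈ A, l v < s) → l o < s)
    (hF : IsExposed ℝ (convexHull ℝ A) F) (hne : F.Nonempty) (hproper : F ≠ convexHull ℝ A) :
    ((↑) ⁻¹' F : Set A) ∈ tightSet (fun v : A => (v : E) - o) (1 : A → ℝ) ''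
      dualPolyhedron (fun v : A => (v : E) - o) 1 := by
  obtain ⟨x₀, hx₀⟩ := hne
  obtain ⟨l, rfl⟩ := hF ⟨x₀, hx₀⟩
  have hA : A ⊆ convexHull ℝ A := subset_convexHull ℝ A
  have hle : ∀ v ∈ A, l v ≤ l x₀ := fun v hv => hx₀.2 v (hA hv)
  have hlt : ∃ v ∈ A, l v < l x₀ := by
    by_contra! hge
    have hsub : A ⊆ l.toExposed (convexHull ℝ A) := fun v hv =>
      ⟨hA hv, fun y hy => (hx₀.2 y hy).trans (hge v hv)⟩
    exact hproper (hF.subset.antisymm (convexHull_min hsub (hF.convex (convex_convexHull ℝ A))))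
  have hpos : 0 < l x₀ - l o := sub_pos.2 (ho l.toLinearMap _ hle hlt)
  refine ⟨(l x₀ - l o)⁻¹ • l.toLinearMap, fun v => ?_, ?_⟩
  · change (l x₀ - l o)⁻¹ * l (v - o) ≤ 1
    rw [map_sub, inv_mul_le_one₀ hpos]
    exact sub_le_sub_right (hle v v.2) _
  · ext v
    change (l x₀ - l o)⁻¹ * l (v - o) = 1 ↔ (v : E) ∈ l.toExposed (convexHull ℝ A)
    rw [map_sub, inv_mul_eq_one₀ hpos.ne', sub_left_inj]
    exact ⟨fun h => ⟨hA v.2, fun y hy => h ▸ hx₀.2 y hy⟩,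
      fun h => (h.2 x₀ hx₀.1).antisymm (hle v v.2)⟩

variable [T2Space E] [IsTopologicalAddGroup E] [ContinuousSMul ℝ E] [LocallyConvexSpace ℝ E]

lemma convexHull_extremePoints_of_isExposed (hA : A.Finite)
    (hF : IsExposed ℝ (convexHull ℝ A) F) : convexHull ℝ (F.extremePoints ℝ) = F := by
  have hsub : F.extremePoints ℝ ⊆ A :=
    hF.isExtreme.extremePoints_subset_extremePoints.trans extremePoints_convexHull_subset
  rw [← ((hA.subset hsub).isClosed_convexHull ℝ).closure_eq]
  exact closure_convexHull_extremePoints (hF.isCompact (hA.isCompact_convexHull ℝ))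
    (hF.convex (convex_convexHull ℝ A))

lemma convexHull_inter_of_isExposed (hA : A.Finite) (hF : IsExposed ℝ (convexHull ℝ A) F) :
    convexHull ℝ (F ∩ A) = F := by
  refine Subset.antisymm
    (convexHull_min inter_subset_left (hF.convex (convex_convexHull ℝ A))) ?_
  conv_lhs => rw [← convexHull_extremePoints_of_isExposed hA hF]
  exact convexHull_mono <| subset_inter extremePoints_subset <|
    hF.isExtreme.extremePoints_subset_extremePoints.trans extremePoints_convexHull_subset

lemma injOn_preimage_isExposed (hA : A.Finite) :
    InjOn (fun F => ((↑) ⁻¹' F : Set A)) {F | IsExposed ℝ (convexHull ℝ A) F} := by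
  intro F₁ h₁ F₂ h₂ heq
  rw [← convexHull_inter_of_isExposed hA h₁, ← convexHull_inter_of_isExposed hA h₂, inter_comm,
    inter_comm F₂, (Subtype.preimage_val_eq_preimage_val_iff _ _ _).1 heq]

lemma finite_setOf_isExposed (hA : A.Finite) : {F | IsExposed ℝ (convexHull ℝ A) F}.Finite :=
  have := hA.to_subtype
  Finite.of_injOn (mapsTo_univ _ _) (injOn_preimage_isExposed hA) (toFinite _)

lemma ncard_proper_faces_le (hA : A.Finite) (hne : A.Nonempty) :
    {F | IsExposed ℝ (convexHull ℝ A) F ∧ F.Nonempty ∧ F ≠ convexHull ℝ A}.ncard ≤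
      2 * (A.ncard + 1) ^ (Module.finrank ℝ (vectorSpan ℝ A) / 2) *
        2 ^ Module.finrank ℝ (vectorSpan ℝ A) := by
  have := hA.fintype
  obtain ⟨o, hoA, ho⟩ := exists_mem_affineSpan_forall_apply_lt hA hne
  have hmaps : MapsTo (fun F => ((↑) ⁻¹' F : Set A))
      {F | IsExposed ℝ (convexHull ℝ A) F ∧ F.Nonempty ∧ F ≠ convexHull ℝ A}
      (tightSet (fun v : A => (v : E) - o) (1 : A → ℝ) ''
        dualPolyhedron (fun v : A => (v : E) - o) 1) :=
    fun _ hF => preimage_mem_image_tightSet ho hF.1 hF.2.1 hF.2.2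
  rw [← span_range_sub_eq_vectorSpan hoA, ← Nat.card_coe_set_eq A, Nat.card_eq_fintype_card]
  exact (ncard_le_ncard_of_injOn _ hmaps
    ((injOn_preimage_isExposed hA).mono fun _ hF => hF.1)).trans (ncard_image_tightSet_le _)

lemma ncard_kFaces_le (hA : A.Finite) (hk : k < Module.finrank ℝ (vectorSpan ℝ A)) :
    (kFaces (convexHull ℝ A) k).ncard ≤
      2 * (A.ncard + 1) ^ (Module.finrank ℝ (vectorSpan ℝ A) / 2) *
        2 ^ Module.finrank ℝ (vectorSpan ℝ A) := by
  have hne : A.Nonempty := by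
    contrapose! hk
    rw [hk, vectorSpan_empty, finrank_bot]
    exact k.zero_le
  have hproper : kFaces (convexHull ℝ A) k ⊆
      {F | IsExposed ℝ (convexHull ℝ A) F ∧ F.Nonempty ∧ F ≠ convexHull ℝ A} := by
    rintro F ⟨hF, hFne, rfl⟩
    exact ⟨hF, hFne, fun heq => hk.ne (by rw [heq, vectorSpan_convexHull])⟩
  exact (ncard_le_ncard hproper ((finite_setOf_isExposed hA).subset fun _ hF => hF.1)).trans
    (ncard_proper_faces_le hA hne)

end Faces

/-! ### Colour patterns -/

section FaceBound

variable {ι : Type*} [Fintype ι] [DecidableEq ι]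

/-- The bracket on the right-hand side of the theorem, for polytopes with `n i` vertices each; `h`
stands for `⌊d / 2⌋`. -/
def faceBound (n : ι → ℕ) (k h : ℕ) : ℕ :=
  (∑ i, ∑ j, if i ≠ j then n i * n j ^ k else 0) + ∑ i, n i ^ min (k + 1) h

lemma mul_pow_le_faceBound (n : ι → ℕ) (k h : ℕ) {i j : ι} (hij : i ≠ j) :
    n i * n j ^ k ≤ faceBound n k h :=
  calc n i * n j ^ k = if i ≠ j then n i * n j ^ k else 0 := (if_pos hij).symm
    _ ≤ ∑ j, if i ≠ j then n i * n j ^ k else 0 :=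
      Finset.single_le_sum (f := fun j => if i ≠ j then n i * n j ^ k else 0)
        (fun _ _ => Nat.zero_le _) (Finset.mem_univ j)
    _ ≤ ∑ i, ∑ j, if i ≠ j then n i * n j ^ k else 0 :=
      Finset.single_le_sum (f := fun i => ∑ j, if i ≠ j then n i * n j ^ k else 0)
        (fun _ _ => Nat.zero_le _) (Finset.mem_univ i)
    _ ≤ faceBound n k h := Nat.le_add_right _ _

lemma pow_le_faceBound (n : ι → ℕ) (k h : ℕ) (i : ι) :
    n i ^ min (k + 1) h ≤ faceBound n k h :=
  (Finset.single_le_sum (f := fun i => n i ^ min (k + 1) h) (fun _ _ => Nat.zero_le _)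
    (Finset.mem_univ i)).trans (Nat.le_add_left _ _)

end FaceBound

section ColourPatterns

variable {ι E : Type*} {V : ι → Set E} {k d : ℕ} {c : Fin (k + 1) → ι}

lemma exists_ne_prod_le_mul_pow (n : ι → ℕ) (hc : ∀ i, c ≠ fun _ => i) :
    ∃ i j, i ≠ j ∧ ∏ r, n (c r) ≤ n i * n j ^ k := by
  obtain ⟨q, -, hq⟩ := Finset.exists_max_image Finset.univ (n ∘ c) Finset.univ_nonempty
  obtain ⟨r, hr⟩ : ∃ r, c r ≠ c q := Function.ne_iff.1 (hc (c q))
  refine ⟨c r, c q, hr, ?_⟩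
  rw [← Finset.mul_prod_erase Finset.univ (fun r => n (c r)) (Finset.mem_univ r)]
  refine Nat.mul_le_mul_left _ ((Finset.prod_le_pow_card _ _ _ fun s _ => hq s ?_).trans_eq ?_)
  · exact Finset.mem_univ s
  · simp

variable [AddCommGroup E] [Module ℝ E] [TopologicalSpace E]

/-- The `k`-faces of `conv (⋃ i, V i)` whose affine span is spanned by points `s 0, …, s k` of the
face with `s j` in the colour class `V (c j)`; a face may have several colour patterns `c`. -/
def kFacesWithPattern (V : ι → Set E) (c : Fin (k + 1) → ι) : Set (Set E) :=
  {F ∈ kFaces (convexHull ℝ (⋃ i, V i)) k |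
    ∃ s : Fin (k + 1) → E, (∀ j, s j ∈ F ∩ V (c j)) ∧ affineSpan ℝ (range s) = affineSpan ℝ F}

lemma ncard_kFacesWithPattern_le_prod (hV : ∀ i, (V i).Finite) :
    (kFacesWithPattern V c).ncard ≤ ∏ j, (V (c j)).ncard := by
  lift V to ι → Finset E using hV
  choose! s hs hspan using fun F (hF : F ∈ kFacesWithPattern (fun i => (V i : Set E)) c) => hF.2
  calc (kFacesWithPattern (fun i => (V i : Set E)) c).ncard
      ≤ (Fintype.piFinset fun j => V (c j) : Set (Fin (k + 1) → E)).ncard :=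
        ncard_le_ncard_of_injOn s
          (fun F hF => Finset.mem_coe.2 <| Fintype.mem_piFinset.2 fun j => (hs F hF j).2)
          (fun F₁ h₁ F₂ h₂ heq => eq_of_affineSpan_eq h₁.1.1 h₂.1.1 <| by
            rw [← hspan F₁ h₁, heq, hspan F₂ h₂])
    _ = ∏ j, (V (c j) : Set E).ncard := by
        simp only [ncard_coe_finset, Fintype.card_piFinset]

variable [T2Space E] [IsTopologicalAddGroup E] [ContinuousSMul ℝ E] [LocallyConvexSpace ℝ E]

lemma kFaces_subset_iUnion_kFacesWithPattern [Finite ι] (hV : ∀ i, (V i).Finite) :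
    kFaces (convexHull ℝ (⋃ i, V i)) k ⊆ ⋃ c : Fin (k + 1) → ι, kFacesWithPattern V c := by
  rintro F ⟨hF, hne, hk⟩
  have hVU : (⋃ i, V i).Finite := finite_iUnion hV
  have hhull : convexHull ℝ (F ∩ ⋃ i, V i) = F := convexHull_inter_of_isExposed hVU hF
  obtain ⟨s, hs, hspan⟩ := exists_affineSpan_range_eq (k := k) (hVU.inter_of_right F)
    (convexHull_nonempty_iff.1 (hhull.symm ▸ hne)) (by rwa [← vectorSpan_convexHull, hhull])
  choose c hc using fun j => mem_iUnion.1 (hs j).2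
  rw [← affineSpan_convexHull (F ∩ _), hhull] at hspan
  exact mem_iUnion.2 ⟨c, ⟨hF, hne, hk⟩, s, fun j => ⟨(hs j).1, hc j⟩, hspan⟩

lemma ncard_kFacesWithPattern_const_le (hV : ∀ i, (V i).Finite) {i : ι}
    (hk : k < Module.finrank ℝ (vectorSpan ℝ (V i))) :
    (kFacesWithPattern V fun _ : Fin (k + 1) => i).ncard ≤
      2 * ((V i).ncard + 1) ^ (Module.finrank ℝ (vectorSpan ℝ (V i)) / 2) *
        2 ^ Module.finrank ℝ (vectorSpan ℝ (V i)) := by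
  have hsub : convexHull ℝ (V i) ⊆ convexHull ℝ (⋃ i, V i) := convexHull_mono (subset_iUnion V i)
  have hspan : ∀ F ∈ kFacesWithPattern V fun _ : Fin (k + 1) => i,
      affineSpan ℝ (F ∩ convexHull ℝ (V i)) = affineSpan ℝ F := by
    rintro F ⟨-, s, hs, hspan⟩
    refine (affineSpan_mono ℝ inter_subset_left).antisymm (hspan ▸ affineSpan_mono ℝ ?_)
    exact range_subset_iff.2 fun j => ⟨(hs j).1, subset_convexHull ℝ _ (hs j).2⟩
  exact (ncard_le_ncard_of_injOn (fun F => F ∩ convexHull ℝ (V i))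
    (fun F hF => inter_mem_kFaces hF.1 hsub (hspan F hF))
    (fun F₁ h₁ F₂ h₂ heq => eq_of_affineSpan_eq h₁.1.1 h₂.1.1 <| by
      rw [← hspan F₁ h₁, ← hspan F₂ h₂]; exact congrArg _ heq)
    ((finite_setOf_isExposed (hV i)).subset fun _ hF => hF.1)).trans (ncard_kFaces_le (hV i) hk)

lemma ncard_kFacesWithPattern_le_faceBound [Fintype ι] [DecidableEq ι] (hV : ∀ i, (V i).Finite)
    (hd : ∀ i, Module.finrank ℝ (vectorSpan ℝ (V i)) = d) (hk : k < d) (c : Fin (k + 1) → ι) :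
    (kFacesWithPattern V c).ncard ≤
      2 ^ (2 * d + 1) * faceBound (fun i => (V i).ncard) k (d / 2) := by
  have hle : ∀ b : ℕ, b ≤ 2 ^ (2 * d + 1) * b := fun b => Nat.le_mul_of_pos_left b (by positivity)
  by_cases hc : ∀ i, c ≠ fun _ => i
  · obtain ⟨i, j, hij, hprod⟩ := exists_ne_prod_le_mul_pow (fun i => (V i).ncard) hc
    exact (ncard_kFacesWithPattern_le_prod hV).trans <| hprod.trans <|
      (mul_pow_le_faceBound (fun i => (V i).ncard) k (d / 2) hij).trans (hle _)
  push Not at hc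
  obtain ⟨i, rfl⟩ := hc
  have hpow := pow_le_faceBound (fun i => (V i).ncard) k (d / 2) i
  rcases le_total (k + 1) (d / 2) with hkd | hkd
  · refine (ncard_kFacesWithPattern_le_prod hV).trans (le_trans ?_ (hpow.trans (hle _)))
    rw [min_eq_left hkd, Finset.prod_const, Finset.card_univ, Fintype.card_fin]
  · have hpos : 1 ≤ (V i).ncard := by
      refine (ncard_pos (hV i)).2 (nonempty_iff_ne_empty.2 fun h => ?_)
      have := hd i
      rw [h, vectorSpan_empty, finrank_bot] at this
      omega
    rw [min_eq_right hkd] at hpow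
    have hconst := ncard_kFacesWithPattern_const_le hV (i := i) (k := k) (by rwa [hd i])
    rw [hd i] at hconst
    calc (kFacesWithPattern V fun _ : Fin (k + 1) => i).ncard
        ≤ 2 * ((V i).ncard + 1) ^ (d / 2) * 2 ^ d := hconst
      _ ≤ 2 * (2 * (V i).ncard) ^ (d / 2) * 2 ^ d := by gcongr; omega
      _ = 2 ^ (d / 2 + d + 1) * (V i).ncard ^ (d / 2) := by ring
      _ ≤ 2 ^ (2 * d + 1) * faceBound (fun i => (V i).ncard) k (d / 2) := by
        gcongr
        · exact one_le_two
        · omega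

lemma ncard_kFaces_convexHull_iUnion_le [Fintype ι] [DecidableEq ι] (hV : ∀ i, (V i).Finite)
    (hd : ∀ i, Module.finrank ℝ (vectorSpan ℝ (V i)) = d) (hk : k < d) :
    (kFaces (convexHull ℝ (⋃ i, V i)) k).ncard ≤
      Fintype.card ι ^ d * (2 ^ (2 * d + 1) * faceBound (fun i => (V i).ncard) k (d / 2)) := by
  have hfin : (⋃ c : Fin (k + 1) → ι, kFacesWithPattern V c).Finite :=
    (finite_setOf_isExposed (finite_iUnion hV)).subset (iUnion_subset fun _ _ hF => hF.1.1)
  calc (kFaces (convexHull ℝ (⋃ i, V i)) k).ncard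
      ≤ (⋃ c : Fin (k + 1) → ι, kFacesWithPattern V c).ncard :=
        ncard_le_ncard (kFaces_subset_iUnion_kFacesWithPattern hV) hfin
    _ ≤ ∑ c : Fin (k + 1) → ι, (kFacesWithPattern V c).ncard := ncard_iUnion_le_of_fintype _
    _ ≤ ∑ _c : Fin (k + 1) → ι, 2 ^ (2 * d + 1) * faceBound (fun i => (V i).ncard) k (d / 2) :=
        Finset.sum_le_sum fun c _ => ncard_kFacesWithPattern_le_faceBound hV hd hk c
    _ = Fintype.card ι ^ (k + 1) *
          (2 ^ (2 * d + 1) * faceBound (fun i => (V i).ncard) k (d / 2)) := by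
        simp only [Finset.sum_const, Finset.card_univ, Fintype.card_fun, Fintype.card_fin,
          smul_eq_mul]
    _ ≤ _ := by
        gcongr ?_ * _
        rcases (Fintype.card ι).eq_zero_or_pos with h | h
        · simp [h]
        · exact Nat.pow_le_pow_right h hk

end ColourPatterns

theorem stmt4_general {ι E : Type*} [Fintype ι] [DecidableEq ι] [AddCommGroup E] [Module ℝ E]
    [TopologicalSpace E] [T2Space E] [IsTopologicalAddGroup E] [ContinuousSMul ℝ E]
    [LocallyConvexSpace ℝ E] {P : ι → Set E} {k d : ℕ} (hP : ∀ i, (P i).Finite)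
    (hd : ∀ i, Module.finrank ℝ (vectorSpan ℝ (convexHull ℝ (P i))) = d) (hk : k < d) :
    (kFaces (convexHull ℝ (⋃ i, P i)) k).ncard ≤ Fintype.card ι ^ d * (2 ^ (2 * d + 1) *
      faceBound (fun i => ((convexHull ℝ (P i)).extremePoints ℝ).ncard) k (d / 2)) := by
  have hext : ∀ i, convexHull ℝ ((convexHull ℝ (P i)).extremePoints ℝ) = convexHull ℝ (P i) :=
    fun i => convexHull_extremePoints_of_isExposed (hP i) (IsExposed.refl _)
  have hunion : convexHull ℝ (⋃ i, (convexHull ℝ (P i)).extremePoints ℝ) =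
      convexHull ℝ (⋃ i, P i) := by
    refine (convexHull_mono (iUnion_mono fun i => extremePoints_convexHull_subset)).antisymm
      (convexHull_min (iUnion_subset fun i => ?_) (convex_convexHull ℝ _))
    rw [← (convex_convexHull ℝ _).convexHull_subset_iff, ← hext i]
    exact convexHull_mono (subset_iUnion_of_subset i Subset.rfl)
  rw [← hunion]
  refine ncard_kFaces_convexHull_iUnion_le
    (fun i => (hP i).subset extremePoints_convexHull_subset) (fun i => ?_) hk
  rw [← vectorSpan_convexHull, hext, hd]

theorem stmt4 (d m : ℕ) (hd : 2 ≤ d) (hm : 2 ≤ m) :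
    ∃ c : ℝ, 0 < c ∧
      ∀ (u : EuclideanSpace ℝ (Fin (d + 1))) (t : Fin m → ℝ)
        (P : Fin m → Set (EuclideanSpace ℝ (Fin (d + 1)))),
        ‖u‖ = 1 → StrictMono t →
        (∀ i, (P i).Finite) →
        (∀ i, P i ⊆ {x | ⟪x, u⟫ = t i}) →
        (∀ i, adim (convexHull ℝ (P i)) = d) →
        ∀ k, k ≤ d / 2 →
          (fCount (convexHull ℝ (⋃ i, P i)) k : ℝ) ≤
            c * ((∑ i : Fin m, ∑ j : Fin m,
                if i ≠ j then
                  (((convexHull ℝ (P i)).extremePoints ℝ).ncard : ℝ) *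
                    (((convexHull ℝ (P j)).extremePoints ℝ).ncard : ℝ) ^ k
                else 0) +
              ∑ i : Fin m,
                (((convexHull ℝ (P i)).extremePoints ℝ).ncard : ℝ) ^ min (k + 1) (d / 2)) := by
  refine ⟨(m ^ d * 2 ^ (2 * d + 1) : ℕ), by positivity, fun u t P _ _ hP _ hdim k hk => ?_⟩
  have h := stmt4_general hP hdim (show k < d by omega)
  rw [Fintype.card_fin, ← mul_assoc] at h
  exact_mod_cast h
end

section
/- Let d ≥ 2 and m ≥ 2, let Π_1, …, Π_m be parallel hyperplanes in E^{d+1} with Π_j above Π_i for j > i, let P_i ⊂ Π_i be finite sets with each 𝒫_i = conv(P_i) d-dimensional, and let 𝒫 = conv(P_1 ∪ … ∪ P_m), so that 𝒫 is a (d+1)-dimensional polytope with facets 𝒫_1 = 𝒫 ∩ Π_1 and 𝒫_m = 𝒫 ∩ Π_m. Let y be a point beyond the facet 𝒫_1 and beneath every other facet of 𝒫, let z be a point beyond the facet 𝒫_m and beneath every other facet of 𝒫, and let Q = conv(P_1 ∪ … ∪ P_m ∪ {y, z}). Then every nonempty proper exposed face F of 𝒫 with F ≠ 𝒫_1 and F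 ≠ 𝒫_m is also an exposed face of Q. (Claim proved inside Lemma 2.5.) -/
/-!
Let `𝒜` be a family of pairwise disjoint sets, such as the two sections `KP1` and `KPm` by parallel
hyperplanes. A proper face `F ∉ 𝒜` of a polytope lies in a facet outside `𝒜`: as long as `F` is not
a facet itself, its supporting hyperplane can be tilted about `F` in two opposite directions until
it meets a new vertex. This gives two proper faces which are strictly larger than `F` and meet
exactly in `F`. They cannot both belong to `𝒜`: since they have a point in common they would
coincide, and then be equal to `F`. So one of them can replace `F`, and the dimension goes up.

Now let `l ≤ c` cut out `F` and let `k ≤ b` cut out a facet `G ⊇ F` outside `𝒜`. The new points are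
beneath `G`, that is, `k < b` there, so for large `M` the functional `l + M • k` stays below
`c + M * b` at the new points and attains this value on the polytope exactly along `F`.
-/

open Set Pointwise RealInnerProductSpace

/-- `F` is a facet of `C`: an exposed face of dimension one less than `C`. -/
def IsFacetOf {N : ℕ} (C F : Set (EuclideanSpace ℝ (Fin N))) : Prop :=
  IsExposed ℝ C F ∧ F.Nonempty ∧ adim F + 1 = adim C

/-- `p` is beyond the facet `F` of `C`: `p` lies in the open halfspace bounded by the affine
hull of `F` that does not contain `C`. -/
def IsBeyond {N : ℕ} (C F : Set (EuclideanSpace ℝ (Fin N)))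
    (p : EuclideanSpace ℝ (Fin N)) : Prop :=
  ∀ x ∈ C, x ∉ (affineSpan ℝ F : Set (EuclideanSpace ℝ (Fin N))) →
    (affineSpan ℝ F).SOppSide p x

/-- `p` is beneath the facet `F` of `C`: `p` lies in the open halfspace bounded by the affine
hull of `F` that contains the interior of `C`. -/
def IsBeneath {N : ℕ} (C F : Set (EuclideanSpace ℝ (Fin N)))
    (p : EuclideanSpace ℝ (Fin N)) : Prop :=
  ∀ x ∈ C, x ∉ (affineSpan ℝ F : Set (EuclideanSpace ℝ (Fin N))) →
    (affineSpan ℝ F).SSameSide p x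

section Faces

variable {E : Type*} [AddCommGroup E] [Module ℝ E] [TopologicalSpace E]
  {l k g : StrongDual ℝ E} {b c M : ℝ} {S T C F G : Set E}

/-- `F` is the face of `C` cut out by the supporting hyperplane `l = c`, with `C` on the side
`l ≤ c`. This is an exposed face with a chosen hyperplane; `F` may be empty, and `l = 0`, `c = 0`
cuts out `C` itself. -/
structure CutsOut (l : StrongDual ℝ E) (c : ℝ) (C F : Set E) : Prop where
  le : ∀ x ∈ C, l x ≤ c
  mem_iff : ∀ x, x ∈ F ↔ x ∈ C ∧ l x = c

lemma exists_cutsOut_of_isExposed (hF : IsExposed ℝ C F) (hne : F.Nonempty) :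
    ∃ l c, CutsOut l c C F := by
  obtain ⟨l, rfl⟩ := hF hne
  obtain ⟨a, haC, ha⟩ := hne
  refine ⟨l, l a, ha, fun x => and_congr_right fun hx => ⟨fun h => ?_, fun h => ?_⟩⟩
  · exact (ha x hx).antisymm (h a haC)
  · exact h ▸ ha

lemma exists_cutsOut_convexHull_of_forall_le (h : ∀ x ∈ S, l x ≤ c) :
    ∃ F, CutsOut l c (convexHull ℝ S) F :=
  ⟨{x ∈ convexHull ℝ S | l x = c},
    convexHull_min h (convex_halfSpace_le l.toLinearMap.isLinear c), fun _ => Iff.rfl⟩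

namespace CutsOut

lemma subset (h : CutsOut l c C F) : F ⊆ C := fun x hx => ((h.mem_iff x).1 hx).1

lemma apply_eq (h : CutsOut l c C F) {x : E} (hx : x ∈ F) : l x = c := ((h.mem_iff x).1 hx).2

lemma apply_lt (h : CutsOut l c C F) {x : E} (hx : x ∈ C) (hxF : x ∉ F) : l x < c :=
  (h.le x hx).lt_of_ne fun hc => hxF ((h.mem_iff x).2 ⟨hx, hc⟩)

lemma isExposed (h : CutsOut l c C F) : IsExposed ℝ C F := by
  rintro ⟨a, ha⟩
  refine ⟨l, Set.ext fun x => (h.mem_iff x).trans (and_congr_right fun hx => ⟨?_, fun hmax => ?_⟩)⟩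
  · exact fun hxc y hy => hxc ▸ h.le y hy
  · exact (h.le x hx).antisymm (h.apply_eq ha ▸ hmax a (h.subset ha))

lemma convex (h : CutsOut l c C F) (hC : Convex ℝ C) : Convex ℝ F := by
  have hF : F = C ∩ {x | l x = c} := Set.ext h.mem_iff
  exact hF ▸ hC.inter (convex_hyperplane l.toLinearMap.isLinear c)

lemma apply_eq_of_mem_affineSpan (h : CutsOut l c C F) {x : E} (hx : x ∈ affineSpan ℝ F) :
    l x = c := by
  refine affineSpan_induction hx (fun _ => h.apply_eq) fun r x y z hx hy hz => ?_
  simp [hx, hy, hz]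

lemma notMem_affineSpan (h : CutsOut l c C F) {x : E} (hx : x ∈ C) (hxF : x ∉ F) :
    x ∉ affineSpan ℝ F :=
  fun hspan => (h.apply_lt hx hxF).ne (h.apply_eq_of_mem_affineSpan hspan)

lemma finrank_vectorSpan_lt (h : CutsOut l c C F) (hne : F.Nonempty) (hFG : F ⊂ G) (hGC : G ⊆ C)
    [FiniteDimensional ℝ (vectorSpan ℝ G)] :
    Module.finrank ℝ (vectorSpan ℝ F) < Module.finrank ℝ (vectorSpan ℝ G) := by
  obtain ⟨x, hxG, hxF⟩ := exists_of_ssubset hFG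
  have hspan : affineSpan ℝ F < affineSpan ℝ G :=
    SetLike.lt_iff_le_and_exists.2 ⟨affineSpan_mono ℝ hFG.subset, x, subset_affineSpan ℝ G hxG,
      h.notMem_affineSpan (hGC hxG) hxF⟩
  apply Submodule.finrank_lt_finrank_of_lt
  simpa only [direction_affineSpan] using
    AffineSubspace.direction_lt_of_nonempty hspan ((affineSpan_nonempty ℝ).2 hne)

lemma apply_lt_of_sSameSide (h : CutsOut l c C F) {p x : E} (hx : x ∈ C)
    (hpx : (affineSpan ℝ F).SSameSide p x) : l p < c := by
  have hlx : l x < c := h.apply_lt hx fun hxF => hpx.right_notMem (subset_affineSpan ℝ F hxF)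
  obtain ⟨⟨q₁, hq₁, q₂, hq₂, hray⟩, hp_notMem, hx_notMem⟩ := hpx
  obtain ⟨r, hr, hrq⟩ := hray.exists_pos_left
    (vsub_ne_zero.2 fun hpq => hp_notMem (hpq ▸ hq₁))
    (vsub_ne_zero.2 fun hxq => hx_notMem (hxq ▸ hq₂))
  have hscale : r * (l p - c) = l x - c := by
    simpa [h.apply_eq_of_mem_affineSpan hq₁, h.apply_eq_of_mem_affineSpan hq₂]
      using congrArg l hrq
  have hneg : r * (l p - c) < 0 := hscale ▸ sub_neg.2 hlx
  exact sub_neg.1 ((pos_iff_neg_of_mul_neg hneg).1 hr)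

lemma add_smul (hF : CutsOut l c C F) (hG : CutsOut k b C G) (hFG : F ⊆ G) (hM : 0 ≤ M) :
    CutsOut (l + M • k) (c + M * b) C F := by
  have hMk : ∀ x ∈ C, M * k x ≤ M * b := fun x hx => mul_le_mul_of_nonneg_left (hG.le x hx) hM
  refine ⟨fun x hx => add_le_add (hF.le x hx) (hMk x hx), fun x => ⟨fun hx => ?_, ?_⟩⟩
  · exact ⟨hF.subset hx, congrArg₂ (· + M * ·) (hF.apply_eq hx) (hG.apply_eq (hFG hx))⟩
  · rintro ⟨hx, hxc : l x + M * k x = c + M * b⟩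
    exact (hF.mem_iff x).2 ⟨hx, (hF.le x hx).antisymm (by linarith [hMk x hx])⟩

/-! ### Adding points strictly below the hyperplane of a face -/

lemma convex_halfSpace_lt_union (h : CutsOut l c C F) (hC : Convex ℝ C) :
    Convex ℝ ({x | l x < c} ∪ F) := by
  have hle : ∀ x ∈ {x | l x < c} ∪ F, l x ≤ c := by
    rintro x (hx | hx)
    exacts [hx.le, (h.apply_eq hx).le]
  refine convex_iff_forall_pos.2 fun x hx y hy α β hα hβ hαβ => ?_
  have hc : α * c + β * c = c := by rw [← add_mul, hαβ, one_mul]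
  have hαx : α * l x ≤ α * c := mul_le_mul_of_nonneg_left (hle x hx) hα.le
  have hβy : β * l y ≤ β * c := mul_le_mul_of_nonneg_left (hle y hy) hβ.le
  have hlxy : l (α • x + β • y) = α * l x + β * l y := by simp
  by_cases hxF : x ∈ F
  · by_cases hyF : y ∈ F
    · exact Or.inr (h.convex hC hxF hyF hα.le hβ.le hαβ)
    · have hβy' : β * l y < β * c := mul_lt_mul_of_pos_left (hy.resolve_right hyF) hβ
      exact Or.inl (by rw [mem_ofPred_eq]; linarith)
  · have hαx' : α * l x < α * c := mul_lt_mul_of_pos_left (hx.resolve_right hxF) hα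
    exact Or.inl (by rw [mem_ofPred_eq]; linarith)

lemma convexHull_union (h : CutsOut l c C F) (hC : Convex ℝ C) (hT : ∀ p ∈ T, l p < c) :
    CutsOut l c (convexHull ℝ (C ∪ T)) F := by
  have hsub : convexHull ℝ (C ∪ T) ⊆ {x | l x < c} ∪ F := by
    refine convexHull_min (union_subset (fun x hx => ?_) fun p hp => Or.inl (hT p hp))
      (h.convex_halfSpace_lt_union hC)
    exact or_iff_not_imp_right.2 (h.apply_lt hx)
  refine ⟨fun x hx => ?_, fun x => ⟨fun hx => ?_, fun hx => ?_⟩⟩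
  · exact (hsub hx).elim (fun hlt => le_of_lt hlt) fun hxF => (h.apply_eq hxF).le
  · exact ⟨subset_convexHull ℝ _ (Or.inl (h.subset hx)), h.apply_eq hx⟩
  · exact (hsub hx.1).resolve_left fun hlt => hlt.ne hx.2

end CutsOut

lemma exists_nonneg_forall_add_smul_lt (hT : IsCompact T) (l : StrongDual ℝ E) (c : ℝ)
    (hk : ∀ p ∈ T, k p < b) : ∃ M : ℝ, 0 ≤ M ∧ ∀ p ∈ T, (l + M • k) p < c + M * b := by
  have hcont : ContinuousOn (fun p => (l p - c) / (b - k p)) T :=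
    ContinuousOn.div (by fun_prop) (by fun_prop) fun p hp => (sub_pos.2 (hk p hp)).ne'
  obtain ⟨M₀, hM₀⟩ := hT.bddAbove_image hcont
  obtain ⟨M, hM⟩ := exists_gt (max 0 M₀)
  refine ⟨M, (le_max_left _ _).trans hM.le, fun p hp => ?_⟩
  have hratio : (l p - c) / (b - k p) < M :=
    (hM₀ (mem_image_of_mem _ hp)).trans_lt ((le_max_right _ _).trans_lt hM)
  have hmul : l p - c < M * (b - k p) := (div_lt_iff₀ (sub_pos.2 (hk p hp))).1 hratio
  change l p + M * k p < c + M * b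
  linarith

lemma isExposed_convexHull_union (hC : Convex ℝ C) (hF : IsExposed ℝ C F)
    (hG : CutsOut k b C G) (hFG : F ⊆ G) (hT : IsCompact T) (hk : ∀ p ∈ T, k p < b) :
    IsExposed ℝ (convexHull ℝ (C ∪ T)) F := by
  intro hne
  obtain ⟨l, c, hl⟩ := exists_cutsOut_of_isExposed hF hne
  obtain ⟨M, hM, hMT⟩ := exists_nonneg_forall_add_smul_lt hT l c hk
  exact ((hl.add_smul hG hFG hM).convexHull_union hC hMT).isExposed hne

/-! ### Tilting a supporting hyperplane -/

lemma exists_pos_forall_mul_le_and_mul_eq {α : Type*} {S : Set α} (hS : S.Finite) {f h : α → ℝ}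
    (hf : ∀ x ∈ S, 0 ≤ f x) (hfh : ∀ x ∈ S, 0 < h x → 0 < f x) (hh : ∃ x ∈ S, 0 < h x) :
    ∃ s > 0, (∀ x ∈ S, s * h x ≤ f x) ∧ ∃ x ∈ S, 0 < h x ∧ s * h x = f x := by
  obtain ⟨v, ⟨hvS, hv⟩, hmin⟩ :=
    exists_min_image {x ∈ S | 0 < h x} (fun x => f x / h x) (hS.subset (sep_subset _ _)) hh
  have hs : 0 < f v / h v := div_pos (hfh v hvS hv) hv
  refine ⟨f v / h v, hs, fun x hx => ?_, v, hvS, hv, div_mul_cancel₀ _ hv.ne'⟩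
  rcases le_or_gt (h x) 0 with hx₀ | hx₀
  · exact (mul_nonpos_of_nonneg_of_nonpos hs.le hx₀).trans (hf x hx)
  · exact (le_div_iff₀ hx₀).1 (hmin x ⟨hx, hx₀⟩)

lemma CutsOut.exists_tilt (hF : CutsOut l c (convexHull ℝ S) F) (hS : S.Finite)
    (hg : ∀ x ∈ F, g x = b) (hpos : ∃ v ∈ S, b < g v) (hneg : ∃ v ∈ S, g v < b) :
    ∃ s > 0, ∃ G, CutsOut (l + s • g) (c + s * b) (convexHull ℝ S) G ∧ F ⊂ G ∧
      G ≠ convexHull ℝ S := by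
  have hSC : S ⊆ convexHull ℝ S := subset_convexHull ℝ S
  obtain ⟨s, hs, hle, v, hvS, hv, hveq⟩ := exists_pos_forall_mul_le_and_mul_eq hS
    (f := fun x => c - l x) (h := fun x => g x - b) (fun x hx => sub_nonneg.2 (hF.le x (hSC hx)))
    (fun x hx hx₀ => sub_pos.2 (hF.apply_lt (hSC hx) fun hxF => (sub_pos.1 hx₀).ne' (hg x hxF)))
    (by simpa only [sub_pos] using hpos)
  have htilt : ∀ x, (l + s • g) x = l x + s * g x := fun _ => rfl
  obtain ⟨G, hG⟩ : ∃ G, CutsOut (l + s • g) (c + s * b) (convexHull ℝ S) G :=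
    exists_cutsOut_convexHull_of_forall_le fun x hx => by linarith [htilt x, hle x hx]
  have hFG : F ⊆ G := fun x hx =>
    (hG.mem_iff x).2 ⟨hF.subset hx, by rw [htilt, hF.apply_eq hx, hg x hx]⟩
  have hvG : v ∈ G := (hG.mem_iff v).2 ⟨hSC hvS, by linarith [htilt v]⟩
  refine ⟨s, hs, G, hG, ?_, fun hGC => ?_⟩
  · exact (ssubset_iff_of_subset hFG).2 ⟨v, hvG, fun hvF => hv.ne' (sub_eq_zero.2 (hg v hvF))⟩
  · obtain ⟨w, hwS, hw⟩ := hneg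
    have hwG : (l + s • g) w = c + s * b := hG.apply_eq (hGC ▸ hSC hwS)
    linarith [htilt w, hF.le w (hSC hwS), mul_lt_mul_of_pos_left hw hs]

lemma vectorSpan_le_ker (hg : ∀ x ∈ S, g x = b) : vectorSpan ℝ S ≤ g.ker := by
  refine Submodule.span_le.2 ?_
  rintro _ ⟨x, hx, y, hy, rfl⟩
  simp [hg x hx, hg y hy]

end Faces

section FiniteDimensional

variable {E : Type*} [AddCommGroup E] [Module ℝ E] [TopologicalSpace E] [IsTopologicalAddGroup E]
  [ContinuousSMul ℝ E] [T2Space E] [FiniteDimensional ℝ E] {S : Set E}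

lemma exists_strongDual_lt_and_lt (hS : S.Finite) {W : Submodule ℝ E}
    (hW : Module.finrank ℝ W + 1 < Module.finrank ℝ (vectorSpan ℝ S)) (a : E) :
    ∃ g : StrongDual ℝ E, W ≤ g.ker ∧ (∃ v ∈ S, g v < g a) ∧ ∃ v ∈ S, g a < g v := by
  -- If `g` vanishes on `w`, then the numbers `g v - g a` with `v ∈ S` add up to zero, so that
  -- both signs occur unless all of them vanish.
  set w : E := ∑ v ∈ hS.toFinset, (v - a) with hw
  have hnle : ¬ vectorSpan ℝ S ≤ W ⊔ ℝ ∙ w := fun hle => by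
    have hS' := Submodule.finrank_mono hle
    have hsup := Submodule.finrank_add_le_finrank_add_finrank W (ℝ ∙ w)
    have hw' := finrank_span_le_card (R := ℝ) ({w} : Set E)
    rw [toFinset_singleton, Finset.card_singleton] at hw'
    omega
  obtain ⟨e, heS, heW⟩ := SetLike.not_le_iff_exists.1 hnle
  obtain ⟨g₀, hge, hker⟩ := Submodule.exists_le_ker_of_notMem heW
  set g : StrongDual ℝ E := LinearMap.toContinuousLinearMap g₀
  have hsum : ∑ v ∈ hS.toFinset, (g v - g a) = 0 := by
    have hgw : g w = 0 := hker (Submodule.mem_sup_right (Submodule.mem_span_singleton_self w))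
    simpa only [hw, map_sum, map_sub] using hgw
  have hne : ∃ v ∈ hS.toFinset, g v - g a ≠ 0 := by
    by_contra! hconst
    exact hge (vectorSpan_le_ker (g := g)
      (fun v hv => sub_eq_zero.1 (hconst v (hS.mem_toFinset.2 hv))) heS)
  refine ⟨g, le_sup_left.trans hker, ?_, ?_⟩
  · obtain ⟨v, hv, hlt⟩ := Finset.exists_pos_of_sum_zero_of_exists_nonzero
      (fun v => -(g v - g a)) (by rw [Finset.sum_neg_distrib, hsum, neg_zero])
      (by simpa only [ne_eq, neg_eq_zero] using hne)
    exact ⟨v, hS.mem_toFinset.1 hv, sub_neg.1 (neg_pos.1 hlt)⟩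
  · obtain ⟨v, hv, hlt⟩ := Finset.exists_pos_of_sum_zero_of_exists_nonzero _ hsum hne
    exact ⟨v, hS.mem_toFinset.1 hv, sub_pos.1 hlt⟩

/-! ### Facets containing a face -/

lemma exists_isExposed_inter_eq {F : Set E} (hS : S.Finite)
    (hF : IsExposed ℝ (convexHull ℝ S) F) (hne : F.Nonempty)
    (hdim : Module.finrank ℝ (vectorSpan ℝ F) + 1 < Module.finrank ℝ (vectorSpan ℝ S)) :
    ∃ G₁ G₂, (IsExposed ℝ (convexHull ℝ S) G₁ ∧ F ⊂ G₁ ∧ G₁ ≠ convexHull ℝ S) ∧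
      (IsExposed ℝ (convexHull ℝ S) G₂ ∧ F ⊂ G₂ ∧ G₂ ≠ convexHull ℝ S) ∧ G₁ ∩ G₂ = F := by
  obtain ⟨l, c, hl⟩ := exists_cutsOut_of_isExposed hF hne
  obtain ⟨a, ha⟩ := hne
  obtain ⟨g, hker, hneg, hpos⟩ := exists_strongDual_lt_and_lt hS hdim a
  have hg : ∀ x ∈ F, g x = g a := fun x hx =>
    sub_eq_zero.1 ((map_sub g x a).symm.trans (hker (vsub_mem_vectorSpan ℝ hx ha)))
  obtain ⟨s, hs, G₁, hG₁, hFG₁, hG₁C⟩ := hl.exists_tilt hS hg hpos hneg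
  obtain ⟨r, hr, G₂, hG₂, hFG₂, hG₂C⟩ := hl.exists_tilt (g := -g) (b := -g a) hS
    (fun x hx => congrArg Neg.neg (hg x hx)) (by simpa using hneg) (by simpa using hpos)
  refine ⟨G₁, G₂, ⟨hG₁.isExposed, hFG₁, hG₁C⟩, ⟨hG₂.isExposed, hFG₂, hG₂C⟩, ?_⟩
  refine Subset.antisymm (fun x hx => ?_) (subset_inter hFG₁.subset hFG₂.subset)
  have h₁ : l x + s * g x = c + s * g a := hG₁.apply_eq hx.1
  have h₂ : l x + r * -g x = c + r * -g a := hG₂.apply_eq hx.2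
  have hsum : (r + s) * (l x - c) = 0 := by linear_combination r * h₁ + s * h₂
  exact (hl.mem_iff x).2 ⟨hG₁.subset hx.1,
    sub_eq_zero.1 ((mul_eq_zero.1 hsum).resolve_left (add_pos hr hs).ne')⟩

lemma exists_facet_notMem_of_pairwiseDisjoint (hS : S.Finite) {𝒜 : Set (Set E)}
    (h𝒜 : 𝒜.PairwiseDisjoint id) {F : Set E} (hF : IsExposed ℝ (convexHull ℝ S) F)
    (hne : F.Nonempty) (hFC : F ≠ convexHull ℝ S) (hF𝒜 : F ∉ 𝒜) :
    ∃ G, IsExposed ℝ (convexHull ℝ S) G ∧ F ⊆ G ∧ G ∉ 𝒜 ∧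
      Module.finrank ℝ (vectorSpan ℝ G) + 1 =
        Module.finrank ℝ (vectorSpan ℝ (convexHull ℝ S)) := by
  have hSC : vectorSpan ℝ (convexHull ℝ S) = vectorSpan ℝ S := by
    rw [← direction_affineSpan, affineSpan_convexHull, direction_affineSpan]
  obtain ⟨l, c, hl⟩ := exists_cutsOut_of_isExposed hF hne
  have hlt := hl.finrank_vectorSpan_lt hne (hF.subset.ssubset_of_ne hFC) subset_rfl
  by_cases hdim : Module.finrank ℝ (vectorSpan ℝ F) + 1 =
      Module.finrank ℝ (vectorSpan ℝ (convexHull ℝ S))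
  · exact ⟨F, hF, subset_rfl, hF𝒜, hdim⟩
  obtain ⟨G₁, G₂, h₁, h₂, hinter⟩ := exists_isExposed_inter_eq hS hF hne
    (hSC ▸ (Nat.succ_le_of_lt hlt).lt_of_ne hdim)
  obtain ⟨G', ⟨hG', hFG', hG'C⟩, hG'𝒜⟩ : ∃ G', (IsExposed ℝ (convexHull ℝ S) G' ∧ F ⊂ G' ∧
      G' ≠ convexHull ℝ S) ∧ G' ∉ 𝒜 := by
    by_contra! hcon
    have hG₁₂ : G₁ = G₂ := h𝒜.elim (hcon G₁ h₁) (hcon G₂ h₂)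
      (not_disjoint_iff_nonempty_inter.2 (hinter ▸ hne))
    have hG₁F : G₁ = F := by rw [← hinter, ← hG₁₂, inter_self]
    exact hF𝒜 (hG₁F ▸ hcon G₁ h₁)
  obtain ⟨G, hG, hG'G, hG𝒜, hGdim⟩ :=
    exists_facet_notMem_of_pairwiseDisjoint hS h𝒜 hG' (hne.mono hFG'.subset) hG'C hG'𝒜
  exact ⟨G, hG, hFG'.subset.trans hG'G, hG𝒜, hGdim⟩
termination_by Module.finrank ℝ (vectorSpan ℝ (convexHull ℝ S)) -
  Module.finrank ℝ (vectorSpan ℝ F)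
decreasing_by
  exact Nat.sub_lt_sub_left hlt (hl.finrank_vectorSpan_lt hne hFG' hG'.subset)

end FiniteDimensional

theorem stmt6_general {N : ℕ} {S T : Set (EuclideanSpace ℝ (Fin N))} (hS : S.Finite)
    (hT : IsCompact T) {𝒜 : Set (Set (EuclideanSpace ℝ (Fin N)))}
    (h𝒜 : 𝒜.PairwiseDisjoint id)
    (hbeneath : ∀ p ∈ T, ∀ G, IsFacetOf (convexHull ℝ S) G → G ∉ 𝒜 →
      IsBeneath (convexHull ℝ S) G p)
    {F : Set (EuclideanSpace ℝ (Fin N))} (hF : IsExposed ℝ (convexHull ℝ S) F)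
    (hne : F.Nonempty) (hFC : F ≠ convexHull ℝ S) (hF𝒜 : F ∉ 𝒜) :
    IsExposed ℝ (convexHull ℝ (S ∪ T)) F := by
  obtain ⟨G, hG, hFG, hG𝒜, hdim⟩ :=
    exists_facet_notMem_of_pairwiseDisjoint hS h𝒜 hF hne hFC hF𝒜
  have hGne : G.Nonempty := hne.mono hFG
  obtain ⟨k, b, hk⟩ := exists_cutsOut_of_isExposed hG hGne
  have hGC : G ≠ convexHull ℝ S := by
    rintro rfl
    exact Nat.succ_ne_self _ hdim
  obtain ⟨x, hx, hxG⟩ := exists_of_ssubset (hG.subset.ssubset_of_ne hGC)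
  have hkT : ∀ p ∈ T, k p < b := fun p hp => hk.apply_lt_of_sSameSide hx
    (hbeneath p hp G ⟨hG, hGne, hdim⟩ hG𝒜 x hx (hk.notMem_affineSpan hx hxG))
  simpa only [convexHull_convexHull_union_left] using
    isExposed_convexHull_union (convex_convexHull ℝ S) hF hk hFG hT hkT

theorem stmt6 (d m : ℕ) (hd : 2 ≤ d) (hm : 2 ≤ m)
    (u : EuclideanSpace ℝ (Fin (d + 1))) (hu : ‖u‖ = 1)
    (t : Fin m → ℝ) (ht : StrictMono t)
    (P : Fin m → Set (EuclideanSpace ℝ (Fin (d + 1))))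
    (hfin : ∀ i, (P i).Finite)
    (hsub : ∀ i, P i ⊆ {x | ⟪x, u⟫ = t i})
    (hdim : ∀ i, adim (convexHull ℝ (P i)) = d)
    (KP KP1 KPm Q : Set (EuclideanSpace ℝ (Fin (d + 1))))
    (hKP : KP = convexHull ℝ (⋃ i, P i))
    (hKP1 : KP1 = KP ∩ {x | ⟪x, u⟫ = t ⟨0, by omega⟩})
    (hKPm : KPm = KP ∩ {x | ⟪x, u⟫ = t ⟨m - 1, by omega⟩})
    (y z : EuclideanSpace ℝ (Fin (d + 1)))
    (hy₁ : IsBeyond KP KP1 y)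
    (hy₂ : ∀ F, IsFacetOf KP F → F ≠ KP1 → IsBeneath KP F y)
    (hz₁ : IsBeyond KP KPm z)
    (hz₂ : ∀ F, IsFacetOf KP F → F ≠ KPm → IsBeneath KP F z)
    (hQ : Q = convexHull ℝ ((⋃ i, P i) ∪ {y, z})) :
    ∀ F : Set (EuclideanSpace ℝ (Fin (d + 1))),
      IsExposed ℝ KP F → F.Nonempty → F ≠ KP → F ≠ KP1 → F ≠ KPm →
      IsExposed ℝ Q F := by
  have hlt : t ⟨0, by omega⟩ < t ⟨m - 1, by omega⟩ := ht (Fin.mk_lt_mk.2 (by omega))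
  have hdisj : Disjoint KP1 KPm := disjoint_left.2 fun x hx1 hxm =>
    hlt.ne ((hKP1 ▸ hx1).2.symm.trans (hKPm ▸ hxm).2)
  subst hKP hQ
  refine fun F hF hne hFC hF1 hFm => stmt6_general (𝒜 := {KP1, KPm}) (finite_iUnion hfin)
    (toFinite {y, z}).isCompact (pairwise_pair_of_symm.2 fun _ => hdisj) ?_ hF hne hFC
    (by simp [hF1, hFm])
  rintro p (rfl | rfl) G hG hGA
  · exact hy₂ G hG fun h => hGA (Or.inl h)
  · exact hz₂ G hG fun h => hGA (Or.inr h)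
end
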